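/- Let $S_0 = k[x_0,\ldots,x_{n+e}]$, $J = (x_0,\ldots,x_{e-1})$, $u$ a monomial in $x_0,\ldots,x_{e-1}$ of degree $r$, $v$ a non-constant monomial in $x_e,\ldots,x_{n+e}$ with $\deg(uv) > r+1$, and $I = (uv) + J^{r+1}$. Then $\beta^{S_0}_{i,r+1}(I) = \binom{e+r}{i+r+1}\binom{r+i}{r}$ for $0 \le i < e$, $\beta^{S_0}_{i,\deg(uv)}(I) = \binom{e}{i}$ for $0 \le i \le e$, and all other graded Betti numbers of $I$ vanish. -/

import Mathlib

set_option synthInstance.maxHeartbeats 1000000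
set_option maxHeartbeats 2000000

noncomputable section

open MvPolynomial

namespace Paper

variable (k : Type) [Field k]

/-- The degree-`d` graded component of `S₀/I` as a `k`-subspace. -/
def quotComponent {N : ℕ} (I : Ideal (MvPolynomial (Fin N) k)) (d : ℕ) :
    Submodule k (MvPolynomial (Fin N) k ⧸ I) :=
  (MvPolynomial.homogeneousSubmodule (Fin N) k d).map
    (Ideal.Quotient.mkₐ k I).toLinearMap

/-- Hilbert function of `S₀/I`. -/
def hilbFn {N : ℕ} (I : Ideal (MvPolynomial (Fin N) k)) (d : ℕ) : ℕ :=
  Module.finrank k (quotComponent k I d)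

/-- `I` is a homogeneous ideal. -/
def IdealHomog {N : ℕ} (I : Ideal (MvPolynomial (Fin N) k)) : Prop :=
  ∀ f ∈ I, ∀ d : ℕ, MvPolynomial.homogeneousComponent d f ∈ I

/-- `I` is saturated with respect to the irrelevant maximal ideal. -/
def IsSaturatedIdeal {N : ℕ} (I : Ideal (MvPolynomial (Fin N) k)) : Prop :=
  ∀ f : MvPolynomial (Fin N) k, (∀ i : Fin N, MvPolynomial.X i * f ∈ I) → f ∈ I

/-- The subscheme defined by `I` is non-degenerate: `I` contains no nonzero linear form. -/
def Nondegenerate {N : ℕ} (I : Ideal (MvPolynomial (Fin N) k)) : Prop :=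
  ∀ f ∈ I, f.IsHomogeneous 1 → f = 0

/-- `S₀/I` has Hilbert polynomial of degree `n` and multiplicity (degree) `D`. -/
def HasDeg {N : ℕ} (I : Ideal (MvPolynomial (Fin N) k)) (n D : ℕ) : Prop :=
  ∃ P : Polynomial ℚ, P.natDegree = n ∧ (D : ℚ) = P.leadingCoeff * (n.factorial : ℚ) ∧
    ∀ᶠ d : ℕ in Filter.atTop, (hilbFn k I d : ℚ) = Polynomial.eval (d : ℚ) P

/-- The irrelevant maximal ideal of `S₀/I`. -/
def irrelevantIdeal {N : ℕ} (I : Ideal (MvPolynomial (Fin N) k)) :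
    Ideal (MvPolynomial (Fin N) k ⧸ I) :=
  Ideal.span (Set.range fun i : Fin N => Ideal.Quotient.mk I (MvPolynomial.X i))

/-- `S₀/I` is Cohen-Macaulay of dimension `c`: there is a regular sequence of length `c`
in the irrelevant maximal ideal. -/
def IsCMQuot {N : ℕ} (I : Ideal (MvPolynomial (Fin N) k)) (c : ℕ) : Prop :=
  ∃ rs : List (MvPolynomial (Fin N) k ⧸ I), rs.length = c ∧
    (∀ x ∈ rs, x ∈ irrelevantIdeal k I) ∧
    RingTheory.Sequence.IsRegular (MvPolynomial (Fin N) k ⧸ I) rs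

/-- The ideal of `R = S₀/I` generated by the images of `x_e, …, x_{N-1}`. -/
def tailVarsIdeal {N : ℕ} (e : ℕ) (I : Ideal (MvPolynomial (Fin N) k)) :
    Ideal (MvPolynomial (Fin N) k ⧸ I) :=
  Ideal.span {y | ∃ i : Fin N, e ≤ (i : ℕ) ∧ y = Ideal.Quotient.mk I (MvPolynomial.X i)}

/-- The reduction number `r_S(R)` of the Noether normalization by the last variables:
the least `t > 0` with `R_{t+1} = J_{t+1}` for `J = (x_e, …, x_{N-1})R`. -/
def reductionNumber {N : ℕ} (e : ℕ) (I : Ideal (MvPolynomial (Fin N) k)) : ℕ :=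
  sInf {t | 0 < t ∧ quotComponent k I (t + 1) ≤ (tailVarsIdeal k e I).restrictScalars k}

/-- The reduction number `r(R)`: the minimum of `r_J(R₊)` over all minimal reductions `J`
of `R₊`, i.e. ideals generated by `c = dim R` linear forms. -/
def redNumAll {N : ℕ} (I : Ideal (MvPolynomial (Fin N) k)) (c : ℕ) : ℕ :=
  sInf {t | 0 < t ∧ ∃ L : Finset (MvPolynomial (Fin N) k ⧸ I),
    (L : Set (MvPolynomial (Fin N) k ⧸ I)) ⊆ quotComponent k I 1 ∧ L.card = c ∧
    quotComponent k I (t + 1) ≤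
      (Ideal.span (L : Set (MvPolynomial (Fin N) k ⧸ I))).restrictScalars k}

/-- The `k`-algebra map `S = k[x_e, …, x_{N-1}] → R = S₀/I`. -/
def nnMap {N : ℕ} (e : ℕ) (I : Ideal (MvPolynomial (Fin N) k)) :
    MvPolynomial {i : Fin N // e ≤ (i : ℕ)} k →ₐ[k] (MvPolynomial (Fin N) k ⧸ I) :=
  MvPolynomial.aeval fun i => Ideal.Quotient.mk I (MvPolynomial.X i.1)

/-- `S = k[x_e, …, x_{N-1}] → R = S₀/I` is a Noether normalization. -/
def IsNoetherNormalization {N : ℕ} (e : ℕ) (I : Ideal (MvPolynomial (Fin N) k)) : Prop :=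
  Function.Injective (nnMap k e I) ∧ (nnMap k e I).toRingHom.Finite

/-- `μ_S(R) = dim_k R/S₊R`, the minimal number of generators of `R` as an `S`-module. -/
def muS {N : ℕ} (e : ℕ) (I : Ideal (MvPolynomial (Fin N) k)) : ℕ :=
  Module.finrank k ((MvPolynomial (Fin N) k ⧸ I) ⧸ tailVarsIdeal k e I)

/-- total degree of an exponent vector -/
def tdeg {N : ℕ} (a : Fin N →₀ ℕ) : ℕ := a.sum fun _ n => n

/-- degree reverse lexicographic order with `x_0 > x_1 > ⋯ > x_{N-1}`. -/
def drlLt {N : ℕ} (a b : Fin N →₀ ℕ) : Prop :=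
  tdeg a < tdeg b ∨
    (tdeg a = tdeg b ∧ ∃ i : Fin N, b i < a i ∧ ∀ j : Fin N, i < j → a j = b j)

/-- `m` is the leading (largest, w.r.t. degrevlex) exponent of `p`. -/
def IsLeadExp {N : ℕ} (p : MvPolynomial (Fin N) k) (m : Fin N →₀ ℕ) : Prop :=
  m ∈ p.support ∧ ∀ m' ∈ p.support, m' ≠ m → drlLt m' m

/-- The initial ideal of `I` with respect to the degree reverse lexicographic order. -/
def initialIdeal {N : ℕ} (I : Ideal (MvPolynomial (Fin N) k)) :
    Ideal (MvPolynomial (Fin N) k) :=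
  Ideal.span {q | ∃ p ∈ I, ∃ m, IsLeadExp k p m ∧ q = MvPolynomial.monomial m 1}

/-- `p` is homogeneous of degree `d ∈ ℤ` (`0` if `d < 0`). -/
def HomogOfDeg {σ : Type} (p : MvPolynomial σ k) (d : ℤ) : Prop :=
  p = 0 ∨ ∃ m : ℕ, (m : ℤ) = d ∧ p.IsHomogeneous m

/-- A minimal graded free resolution of the graded module `M` (with grading `Mdeg`) over
`A = k[σ]`, recording the graded Betti numbers `β i j = dim_k Tor_i^A(M,k)_{i+j}`:
the `i`-th free module has `β i j` generators in internal degree `i + j`. -/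
structure MinGradedFreeRes (σ : Type) (M : Type) [AddCommGroup M]
    [Module (MvPolynomial σ k) M] [Module k M] (Mdeg : ℤ → Submodule k M) where
  β : ℕ → ℤ → ℕ
  rowFinite : ∀ i, (Function.support (β i)).Finite
  d : ∀ i : ℕ, (((j : ℤ) × Fin (β (i + 1) j)) →₀ MvPolynomial σ k) →ₗ[MvPolynomial σ k]
      ((j : ℤ) × Fin (β i j)) →₀ MvPolynomial σ k
  ε : (((j : ℤ) × Fin (β 0 j)) →₀ MvPolynomial σ k) →ₗ[MvPolynomial σ k] M
  graded : ∀ (i : ℕ) (j j' : ℤ) (s : Fin (β (i + 1) j)) (s' : Fin (β i j')),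
      HomogOfDeg k (d i (Finsupp.single ⟨j, s⟩ 1) ⟨j', s'⟩) (j + 1 - j')
  minimal : ∀ (i : ℕ) (j j' : ℤ) (s : Fin (β (i + 1) j)) (s' : Fin (β i j')),
      j' = j + 1 → d i (Finsupp.single ⟨j, s⟩ 1) ⟨j', s'⟩ = 0
  eps_graded : ∀ (j : ℤ) (s : Fin (β 0 j)), ε (Finsupp.single ⟨j, s⟩ 1) ∈ Mdeg j
  eps_surj : Function.Surjective ε
  exact0 : Function.Exact (d 0) ε
  exactSeq : ∀ i : ℕ, Function.Exact (d (i + 1)) (d i)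

/-- `Mdeg` is a grading of the `k[σ]`-module `M`. -/
def IsGrading (σ : Type) (M : Type) [AddCommGroup M]
    [Module (MvPolynomial σ k) M] [Module k M] (Mdeg : ℤ → Submodule k M) : Prop :=
  (⨆ d, Mdeg d) = ⊤ ∧ iSupIndep Mdeg ∧
    ∀ (i : σ) (d : ℤ), ∀ x ∈ Mdeg d, (MvPolynomial.X i : MvPolynomial σ k) • x ∈ Mdeg (d + 1)

/-- The standard grading on `S₀/I` (indexed by `ℤ`). -/
def quotDeg {N : ℕ} (I : Ideal (MvPolynomial (Fin N) k)) (d : ℤ) :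
    Submodule k (MvPolynomial (Fin N) k ⧸ I) :=
  if 0 ≤ d then quotComponent k I d.toNat else ⊥

/-- The standard grading on a homogeneous ideal `I ⊆ S₀` (indexed by `ℤ`). -/
def idealDeg {N : ℕ} (I : Ideal (MvPolynomial (Fin N) k)) (d : ℤ) :
    Submodule k ↥I :=
  if 0 ≤ d then
    Submodule.comap ((I.subtype).restrictScalars k)
      (MvPolynomial.homogeneousSubmodule (Fin N) k d.toNat)
  else ⊥

/-- `χ_m = Σ_{j=0}^m (-1)^j β_{m-j,j}`. -/
def chiOf (β : ℕ → ℤ → ℕ) (m : ℤ) : ℤ :=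
  if m < 0 then 0
  else ∑ j ∈ Finset.range (m.toNat + 1), (-1 : ℤ) ^ j * (β (m.toNat - j) (j : ℤ) : ℤ)

/-- projective dimension read off from a minimal resolution's Betti table -/
def pdOf (β : ℕ → ℤ → ℕ) : ℕ∞ :=
  ⨆ i : {i : ℕ // ∃ j, β i j ≠ 0}, ((i : ℕ) : ℕ∞)

/-- index type of the variables `x_t, …, x_{N-1}` -/
def tailIdx (N t : ℕ) := {i : Fin N // t ≤ (i : ℕ)}


/-- The `S = k[x_e,…,x_{N-1}]`-module structure on `R = S₀/I` via `nnMap`. -/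
def nnModule {N : ℕ} (e : ℕ) (I : Ideal (MvPolynomial (Fin N) k)) :
    Module (MvPolynomial {i : Fin N // e ≤ (i : ℕ)} k) (MvPolynomial (Fin N) k ⧸ I) :=
  Module.compHom _ (nnMap k e I).toRingHom

/-- The underlying set of the `S`-submodule of `R = S₀/I` spanned by `s`. -/
def nnSpan {N : ℕ} (e : ℕ) (I : Ideal (MvPolynomial (Fin N) k))
    (s : Set (MvPolynomial (Fin N) k ⧸ I)) : Set (MvPolynomial (Fin N) k ⧸ I) :=
  letI := nnModule k e I
  (Submodule.span (MvPolynomial {i : Fin N // e ≤ (i : ℕ)} k) s : Set _)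

/-- The truncated ideal `(I)_{≥ r+1}`, generated by the homogeneous elements of `I`
of degree at least `r + 1`. -/
def truncIdeal {N : ℕ} (I : Ideal (MvPolynomial (Fin N) k)) (r : ℕ) :
    Ideal (MvPolynomial (Fin N) k) :=
  Ideal.span {f | f ∈ I ∧ ∃ d : ℕ, r + 1 ≤ d ∧ f.IsHomogeneous d}

end Paper

end

/-!
The ideal `J ^ (r + 1)` is generated by the monomials of degree `r + 1` in `x₀, …, x_{e-1}`. Add
them one at a time, from the lexicographically largest down, and `uv` last. The colon ideal of the
ideal reached so far by the next generator is always generated by some of `x₀, …, x_{e-1}`; by `uv`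
it is all of `J`. So each step contributes a Koszul complex, shifted by the degree `d` of the
generator added: its generators in homological degree `i` have degree `i + d`. As `d` never
decreases, the connecting map of the horseshoe construction goes from degree `i + d` to degrees at
most `i - 1 + d`. Thus it has no unit entries and the resolution obtained is minimal. Its graded
Betti numbers are sums of binomial coefficients, and any other minimal resolution has the same ones.
-/

noncomputable section

namespace GradedBetti

open MvPolynomial

variable {R σ : Type} [CommRing R]

local notation "S" => MvPolynomial σ R

section Grading

theorem weight_one_eq_degree (m : σ →₀ ℕ) :
    Finsupp.weight (1 : σ → ℤ) m = (m.degree : ℤ) := by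
  simp [Finsupp.weight_apply, Finsupp.degree_apply, Finsupp.sum]

/-- The component of degree `d` of a polynomial, all variables having degree `1`. The degrees are
integers because the generators of a free module may be shifted by any amount. -/
def component (d : ℤ) : S →ₗ[R] S :=
  weightedHomogeneousComponent (1 : σ → ℤ) d

/-- Homogeneity of integer degree `d`, all variables having degree `1`. -/
abbrev IsHomog (p : S) (d : ℤ) : Prop :=
  IsWeightedHomogeneous (1 : σ → ℤ) p d

theorem coeff_component (d : ℤ) (p : S) (m : σ →₀ ℕ) :
    coeff m (component d p) = if (m.degree : ℤ) = d then coeff m p else 0 := by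
  rw [component, coeff_weightedHomogeneousComponent, weight_one_eq_degree]

theorem isHomog_component (d : ℤ) (p : S) : IsHomog (component d p) d :=
  weightedHomogeneousComponent_isWeightedHomogeneous d p

theorem component_eq_self_iff {d : ℤ} {p : S} : component d p = p ↔ IsHomog p d :=
  ⟨fun h => h ▸ isHomog_component d p, fun h => weightedHomogeneousComponent_eq_self h⟩

theorem isHomog_natCast_iff {d : ℕ} {p : S} : IsHomog p (d : ℤ) ↔ p.IsHomogeneous d := by
  refine forall₂_congr fun m _ => ?_
  rw [weight_one_eq_degree, Nat.cast_inj, Finsupp.degree_eq_weight_one]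
  rfl

theorem IsHomog.coeff_eq_zero {d : ℤ} {p : S} (hp : IsHomog p d) {m : σ →₀ ℕ}
    (hm : (m.degree : ℤ) ≠ d) : coeff m p = 0 :=
  IsWeightedHomogeneous.coeff_eq_zero hp m (by rwa [weight_one_eq_degree])

theorem component_mul {b : ℤ} {q : S} (hq : IsHomog q b) (a : ℤ) (p : S) :
    component a (p * q) = component (a - b) p * q := by
  classical
  ext m
  rw [coeff_component, coeff_mul, coeff_mul, ← Finset.sum_const_zero, ← Finset.sum_ite_irrel]
  refine Finset.sum_congr rfl fun x hx => ?_
  have hdeg : x.1.degree + x.2.degree = m.degree := by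
    rw [← Finset.HasAntidiagonal.mem_antidiagonal.mp hx, map_add]
  rw [coeff_component]
  by_cases hb : (x.2.degree : ℤ) = b
  · rw [ite_mul, zero_mul]
    exact if_congr (by omega) rfl rfl
  · rw [hq.coeff_eq_zero hb, mul_zero, mul_zero, ite_self]

theorem constantCoeff_eq_zero {d : ℤ} {p : S} (hp : IsHomog p d) (hd : d ≠ 0) :
    constantCoeff p = 0 :=
  hp.coeff_eq_zero (by simpa using hd.symm)

theorem constantCoeff_component_zero (p : S) :
    constantCoeff (component 0 p) = constantCoeff p := by
  simp [constantCoeff_eq, coeff_component]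

theorem IsHomog.eq_zero_of_neg {d : ℤ} {p : S} (hp : IsHomog p d) (hd : d < 0) : p = 0 := by
  ext m
  exact hp.coeff_eq_zero (by omega)

theorem IsHomog.eq_C {p : S} (hp : IsHomog p 0) : p = C (constantCoeff p) := by
  classical
  ext m
  rw [coeff_C]
  split_ifs with hm
  · rw [← hm, constantCoeff_eq]
  · exact hp.coeff_eq_zero (by simpa [Finsupp.degree_eq_zero_iff] using Ne.symm hm)

theorem IsHomog.eq_zero_of_nonpos {d : ℤ} {p : S} (hp : IsHomog p d) (hd : d ≤ 0)
    (h : constantCoeff p = 0) : p = 0 := by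
  rcases hd.lt_or_eq with hd | rfl
  · exact hp.eq_zero_of_neg hd
  · rw [hp.eq_C, h, C_0]

end Grading

section GradedMaps

variable {ι κ κ' : Type}

/-- The component of degree `t` of an element of the graded free module with generators indexed by
`ι`, the `i`-th one in degree `deg i`. -/
def gradedPart (deg : ι → ℤ) (t : ℤ) : (ι → S) →ₗ[R] (ι → S) :=
  LinearMap.pi fun i => component (t - deg i) ∘ₗ LinearMap.proj i

theorem gradedPart_apply (deg : ι → ℤ) (t : ℤ) (f : ι → S) (i : ι) :
    gradedPart deg t f i = component (t - deg i) (f i) :=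
  rfl

/-- An element of the graded free module with generators in degrees `deg` is homogeneous of degree
`t` if its `i`-th coordinate has degree `t - deg i`. -/
def IsHomogElem (deg : ι → ℤ) (t : ℤ) (f : ι → S) : Prop :=
  ∀ i, IsHomog (f i) (t - deg i)

theorem isHomogElem_gradedPart (deg : ι → ℤ) (t : ℤ) (f : ι → S) :
    IsHomogElem deg t (gradedPart deg t f) :=
  fun i => isHomog_component _ (f i)

theorem gradedPart_eq_self_iff {deg : ι → ℤ} {t : ℤ} {f : ι → S} :
    gradedPart deg t f = f ↔ IsHomogElem deg t f := by
  simp only [funext_iff, gradedPart_apply, component_eq_self_iff, IsHomogElem]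

theorem isHomogElem_single [DecidableEq ι] (deg : ι → ℤ) (i : ι) :
    IsHomogElem deg (deg i) (Pi.single i 1 : ι → S) := by
  intro j
  rcases eq_or_ne j i with rfl | h
  · simpa using isWeightedHomogeneous_one R (1 : σ → ℤ)
  · simpa [h] using isWeightedHomogeneous_zero R (1 : σ → ℤ) _

theorem gradedPart_smul {deg : ι → ℤ} {a : ℤ} {v : ι → S} (hv : IsHomogElem deg a v) (t : ℤ)
    (p : S) : gradedPart deg t (p • v) = component (t - a) p • v := by
  ext1 i
  rw [gradedPart_apply, Pi.smul_apply, Pi.smul_apply, smul_eq_mul, smul_eq_mul,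
    component_mul (hv i)]
  congr 2
  ring_nf

/-- Maps of degree `0` between graded free modules: they commute with taking components. -/
def IsGradedMap (dg : κ → ℤ) (deg : ι → ℤ) (φ : (κ → S) →ₗ[S] (ι → S)) : Prop :=
  ∀ t f, φ (gradedPart dg t f) = gradedPart deg t (φ f)

/-- Submodules of a graded free module that contain the components of their elements. -/
def IsGradedSubmodule (deg : ι → ℤ) (A : Submodule S (ι → S)) : Prop :=
  ∀ t, ∀ f ∈ A, gradedPart deg t f ∈ A

theorem IsGradedMap.isHomogElem {dg : κ → ℤ} {deg : ι → ℤ} {φ : (κ → S) →ₗ[S] (ι → S)}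
    (hφ : IsGradedMap dg deg φ) {t : ℤ} {f : κ → S} (hf : IsHomogElem dg t f) :
    IsHomogElem deg t (φ f) := by
  rw [← gradedPart_eq_self_iff, ← hφ, gradedPart_eq_self_iff.mpr hf]

theorem IsGradedMap.comp {dg' : κ' → ℤ} {dg : κ → ℤ} {deg : ι → ℤ}
    {φ : (κ → S) →ₗ[S] (ι → S)} {ψ : (κ' → S) →ₗ[S] (κ → S)}
    (hφ : IsGradedMap dg deg φ) (hψ : IsGradedMap dg' dg ψ) : IsGradedMap dg' deg (φ ∘ₗ ψ) :=
  fun t f => by rw [LinearMap.comp_apply, hψ, hφ, LinearMap.comp_apply]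

theorem isGradedMap_linearCombination [Fintype κ] {dg : κ → ℤ} {deg : ι → ℤ} {v : κ → ι → S}
    (hv : ∀ s, IsHomogElem deg (dg s) (v s)) :
    IsGradedMap dg deg (Fintype.linearCombination S v) := by
  intro t f
  simp only [Fintype.linearCombination_apply, map_sum, gradedPart_smul (hv _), gradedPart_apply]

theorem isGradedMap_of_single [Finite κ] [DecidableEq κ] {dg : κ → ℤ} {deg : ι → ℤ}
    {φ : (κ → S) →ₗ[S] (ι → S)} (hφ : ∀ s, IsHomogElem deg (dg s) (φ (Pi.single s 1))) :
    IsGradedMap dg deg φ := by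
  cases nonempty_fintype κ
  convert isGradedMap_linearCombination hφ
  refine LinearMap.pi_ext' fun s => LinearMap.ext_ring ?_
  simp

theorem isGradedSubmodule_bot (deg : ι → ℤ) :
    IsGradedSubmodule deg (⊥ : Submodule S (ι → S)) := by
  rintro t f rfl
  exact map_zero (gradedPart deg t)

theorem isGradedSubmodule_top (deg : ι → ℤ) :
    IsGradedSubmodule deg (⊤ : Submodule S (ι → S)) :=
  fun _ _ _ => trivial

theorem IsGradedSubmodule.comap {dg : κ → ℤ} {deg : ι → ℤ} {φ : (κ → S) →ₗ[S] (ι → S)}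
    (hφ : IsGradedMap dg deg φ) {A : Submodule S (ι → S)} (hA : IsGradedSubmodule deg A) :
    IsGradedSubmodule dg (A.comap φ) := by
  intro t f hf
  rw [Submodule.mem_comap, hφ]
  exact hA t _ hf

theorem IsGradedMap.exists_lift [Finite κ] {dg : κ → ℤ} {deg : ι → ℤ} {deg' : κ' → ℤ}
    {ψ : (κ → S) →ₗ[S] (κ' → S)} {θ : (ι → S) →ₗ[S] (κ' → S)}
    (hψ : IsGradedMap dg deg' ψ) (hθ : IsGradedMap deg deg' θ)
    {B : Submodule S (ι → S)} {N : Submodule S (κ' → S)}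
    (hB : IsGradedSubmodule deg B) (hN : IsGradedSubmodule deg' N)
    (h : LinearMap.range ψ ≤ N ⊔ B.map θ) :
    ∃ l : (κ → S) →ₗ[S] (ι → S), IsGradedMap dg deg l ∧ LinearMap.range l ≤ B ∧
      ∀ f, ψ f - θ (l f) ∈ N := by
  classical
  cases nonempty_fintype κ
  have lift_generator (s : κ) :
      ∃ b ∈ B, IsHomogElem deg (dg s) b ∧ ψ (Pi.single s 1) - θ b ∈ N := by
    obtain ⟨n, hn, -, ⟨b, hb, rfl⟩, hnb⟩ :=
      Submodule.mem_sup.mp (h (LinearMap.mem_range_self ψ (Pi.single s 1)))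
    refine ⟨_, hB (dg s) b hb, isHomogElem_gradedPart deg _ b, ?_⟩
    rw [← gradedPart_eq_self_iff.mpr (hψ.isHomogElem (isHomogElem_single dg s)), ← hnb, hθ,
      ← map_sub, add_sub_cancel_right]
    exact hN _ n hn
  choose b hbB hb hψb using lift_generator
  refine ⟨Fintype.linearCombination S b, isGradedMap_linearCombination hb, ?_, fun f => ?_⟩
  · rw [Fintype.range_linearCombination, Submodule.span_le]
    rintro - ⟨s, rfl⟩
    exact hbB s
  · have hzero : N.mkQ ∘ₗ (ψ - θ ∘ₗ Fintype.linearCombination S b) = 0 :=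
      LinearMap.pi_ext' fun s => LinearMap.ext_ring <|
        (Submodule.Quotient.mk_eq_zero N).mpr (by simpa using hψb s)
    exact (Submodule.Quotient.mk_eq_zero N).mp (LinearMap.congr_fun hzero f)

end GradedMaps

section BettiTable

variable {ι κ : Type}

/-- A graded map `ψ` from the free module with generators in degrees `dg` induces a minimal
cover of the subquotient `B / A`: its image spans `B` modulo `A`, and its kernel modulo `A` lies in
the irrelevant ideal times the free module. -/
structure IsMinimalCover (deg : ι → ℤ) (A B : Submodule S (ι → S)) (dg : κ → ℤ)
    (ψ : (κ → S) →ₗ[S] (ι → S)) : Prop where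
  isGradedMap : IsGradedMap dg deg ψ
  sup_range : A ⊔ LinearMap.range ψ = B
  minimal : ∀ f, ψ f ∈ A → ∀ s, constantCoeff (f s) = 0

/-- The rows `b 0, …, b (p - 1)` are those of a minimal graded free resolution of the subquotient
`B / A` of the graded free module with generators in degrees `deg`. Here `b i t` counts the
generators of homological degree `i` and *total* degree `t`. A resolution is a minimal cover
followed by one of the kernel, so that no quotient module is ever formed. -/
def HasBetti : (p : ℕ) → {ι : Type} → (ι → ℤ) → Submodule S (ι → S) → Submodule S (ι → S) →
    (ℕ → ℤ → ℕ) → Prop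
  | 0, _, _, _, _, _ => True
  | p + 1, _, deg, A, B, b =>
      ∃ (κ : Type) (_ : Fintype κ) (dg : κ → ℤ) (ψ : (κ → S) →ₗ[S] (_ → S)),
        IsMinimalCover deg A B dg ψ ∧ (∀ t, Nat.card {s // dg s = t} = b 0 t) ∧
          HasBetti p dg ⊥ (A.comap ψ) fun i => b (i + 1)

theorem HasBetti.sup_map {ι' : Type} {deg : ι → ℤ} {deg' : ι' → ℤ}
    {θ : (ι → S) →ₗ[S] (ι' → S)} (hθ : IsGradedMap deg deg' θ) {B : Submodule S (ι → S)}
    {N : Submodule S (ι' → S)} {p : ℕ} {b : ℕ → ℤ → ℕ}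
    (h : HasBetti p deg (B ⊓ N.comap θ) B b) : HasBetti p deg' N (N ⊔ B.map θ) b := by
  cases p with
  | zero => trivial
  | succ p =>
    obtain ⟨κ, _, dg, ψ, hψ, hcard, hker⟩ := h
    have hψB (f : κ → S) : ψ f ∈ B :=
      hψ.sup_range.le (Submodule.mem_sup_right (LinearMap.mem_range_self ψ f))
    have hcomap : N.comap (θ ∘ₗ ψ) = (B ⊓ N.comap θ).comap ψ := by
      ext f
      simp [hψB f]
    refine ⟨κ, ‹_›, dg, θ ∘ₗ ψ, ⟨hθ.comp hψ.isGradedMap, ?_, fun f hf => ?_⟩, hcard,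
      hcomap ▸ hker⟩
    · have hle : (B ⊓ N.comap θ).map θ ≤ N := Submodule.map_le_iff_le_comap.mpr inf_le_right
      have hmap := congrArg (Submodule.map θ) hψ.sup_range
      rw [Submodule.map_sup] at hmap
      rw [LinearMap.range_comp, ← hmap, ← sup_assoc, sup_eq_left.mpr hle]
    · exact hψ.minimal f ⟨hψB f, hf⟩

theorem HasBetti.of_sup_map {ι' : Type} {deg : ι → ℤ} {deg' : ι' → ℤ}
    {θ : (ι → S) →ₗ[S] (ι' → S)} (hθ : IsGradedMap deg deg' θ) {B : Submodule S (ι → S)}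
    {N : Submodule S (ι' → S)} (hB : IsGradedSubmodule deg B) (hN : IsGradedSubmodule deg' N)
    {p : ℕ} {b : ℕ → ℤ → ℕ} (h : HasBetti p deg' N (N ⊔ B.map θ) b) :
    HasBetti p deg (B ⊓ N.comap θ) B b := by
  cases p with
  | zero => trivial
  | succ p =>
    obtain ⟨κ, _, dg, ψ, hψ, hcard, hker⟩ := h
    obtain ⟨l, hl, hlB, hψl⟩ := hψ.isGradedMap.exists_lift hθ hB hN
      (le_sup_right.trans hψ.sup_range.le)
    have hmem (f : κ → S) : l f ∈ B ⊓ N.comap θ ↔ ψ f ∈ N := by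
      rw [Submodule.mem_inf, and_iff_right (hlB ⟨f, rfl⟩), Submodule.mem_comap,
        ← Submodule.add_mem_iff_right N (hψl f), sub_add_cancel]
    have hcomap : (B ⊓ N.comap θ).comap l = N.comap ψ := Submodule.ext hmem
    refine ⟨κ, ‹_›, dg, l, ⟨hl, ?_, fun f hf => hψ.minimal f ((hmem f).mp hf)⟩, hcard,
      hcomap ▸ hker⟩
    refine le_antisymm (sup_le inf_le_left hlB) fun x hx => ?_
    obtain ⟨n, hn, -, ⟨f, rfl⟩, hnf⟩ := Submodule.mem_sup.mp
      (hψ.sup_range.ge (Submodule.mem_sup_right (Submodule.mem_map_of_mem hx)))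
    rw [← sub_add_cancel x (l f)]
    refine Submodule.add_mem_sup ⟨sub_mem hx (hlB ⟨f, rfl⟩), ?_⟩ ⟨f, rfl⟩
    rw [SetLike.mem_coe, Submodule.mem_comap, map_sub, ← hnf, add_sub_assoc]
    exact add_mem hn (hψl f)

end BettiTable

section Horseshoe

variable {ι α β : Type}

section Coprod

variable {M : Type} [AddCommGroup M] [Module (MvPolynomial σ R) M]

/-- The map `(f, g) ↦ φ f + ψ g` on the free module on a disjoint union. -/
def freeCoprod (φ : (α → S) →ₗ[S] M) (ψ : (β → S) →ₗ[S] M) : (α ⊕ β → S) →ₗ[S] M :=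
  φ ∘ₗ LinearMap.funLeft S S Sum.inl + ψ ∘ₗ LinearMap.funLeft S S Sum.inr

theorem freeCoprod_apply (φ : (α → S) →ₗ[S] M) (ψ : (β → S) →ₗ[S] M) (f : α ⊕ β → S) :
    freeCoprod φ ψ f = φ (f ∘ Sum.inl) + ψ (f ∘ Sum.inr) :=
  rfl

theorem freeCoprod_elim (φ : (α → S) →ₗ[S] M) (ψ : (β → S) →ₗ[S] M) (f : α → S) (g : β → S) :
    freeCoprod φ ψ (Sum.elim f g) = φ f + ψ g :=
  rfl

theorem range_freeCoprod (φ : (α → S) →ₗ[S] M) (ψ : (β → S) →ₗ[S] M) :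
    LinearMap.range (freeCoprod φ ψ) = LinearMap.range φ ⊔ LinearMap.range ψ := by
  refine le_antisymm ?_ (sup_le ?_ ?_)
  · rintro - ⟨f, rfl⟩
    exact Submodule.add_mem_sup ⟨_, rfl⟩ ⟨_, rfl⟩
  · rintro - ⟨f, rfl⟩
    exact ⟨Sum.elim f 0, by rw [freeCoprod_elim, map_zero, add_zero]⟩
  · rintro - ⟨g, rfl⟩
    exact ⟨Sum.elim 0 g, by rw [freeCoprod_elim, map_zero, zero_add]⟩

theorem map_funLeft_inr_comap_freeCoprod (φ : (α → S) →ₗ[S] M) (ψ : (β → S) →ₗ[S] M)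
    (A : Submodule S M) :
    (A.comap (freeCoprod φ ψ)).map (LinearMap.funLeft S S Sum.inr) =
      (A ⊔ LinearMap.range φ).comap ψ := by
  ext g
  constructor
  · rintro ⟨f, hf : φ (f ∘ Sum.inl) + ψ (f ∘ Sum.inr) ∈ A, rfl⟩
    have hψ := Submodule.add_mem_sup hf ((LinearMap.range φ).neg_mem ⟨f ∘ Sum.inl, rfl⟩)
    rwa [add_neg_cancel_comm] at hψ
  · intro hg
    obtain ⟨a, ha, -, ⟨f, rfl⟩, hfg⟩ := Submodule.mem_sup.mp hg
    refine ⟨Sum.elim (-f) g, ?_, rfl⟩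
    rwa [SetLike.mem_coe, Submodule.mem_comap, freeCoprod_elim, ← hfg, map_neg,
      neg_add_cancel_comm_assoc]

/-- Extension by zero of the coordinates in `α` to `α ⊕ β`. -/
def extendInl (α β : Type) : (α → S) →ₗ[S] (α ⊕ β → S) :=
  (LinearEquiv.sumArrowLequivProdArrow α β S S).symm.toLinearMap ∘ₗ LinearMap.inl S _ _

theorem extendInl_apply (f : α → S) : extendInl α β f = Sum.elim f 0 := by
  ext1 (s | s) <;> rfl

theorem ker_extendInl : LinearMap.ker (extendInl α β : (α → S) →ₗ[S] _) = ⊥ := by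
  refine LinearMap.ker_eq_bot.mpr fun f g h => ?_
  rw [extendInl_apply, extendInl_apply] at h
  exact congrArg (· ∘ Sum.inl) h

theorem comap_freeCoprod_inf_ker (φ : (α → S) →ₗ[S] M) (ψ : (β → S) →ₗ[S] M)
    (A : Submodule S M) :
    A.comap (freeCoprod φ ψ) ⊓ LinearMap.ker (LinearMap.funLeft S S Sum.inr) =
      (A.comap φ).map (extendInl α β) := by
  ext f
  constructor
  · rintro ⟨hf, hinr : f ∘ Sum.inr = 0⟩
    refine ⟨f ∘ Sum.inl, ?_, ?_⟩
    · rwa [SetLike.mem_coe, Submodule.mem_comap, freeCoprod_apply, hinr, map_zero,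
        add_zero] at hf
    · rw [extendInl_apply, ← hinr, Sum.elim_comp_inl_inr]
  · rintro ⟨g, hg, rfl⟩
    rw [extendInl_apply]
    refine ⟨?_, rfl⟩
    rwa [SetLike.mem_coe, Submodule.mem_comap, freeCoprod_elim, map_zero, add_zero]

end Coprod

variable {deg : ι → ℤ} {dα : α → ℤ} {dβ : β → ℤ}

theorem isGradedMap_funLeft_inr (dα : α → ℤ) (dβ : β → ℤ) :
    IsGradedMap (R := R) (σ := σ) (Sum.elim dα dβ) dβ (LinearMap.funLeft S S Sum.inr) :=
  fun _ _ => rfl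

theorem isGradedMap_extendInl (dα : α → ℤ) (dβ : β → ℤ) :
    IsGradedMap (R := R) (σ := σ) dα (Sum.elim dα dβ) (extendInl α β) := by
  intro t f
  ext1 (s | s)
  · rfl
  · exact (map_zero (component (t - dβ s))).symm

theorem IsGradedMap.freeCoprod {φ : (α → S) →ₗ[S] (ι → S)} {ψ : (β → S) →ₗ[S] (ι → S)}
    (hφ : IsGradedMap dα deg φ) (hψ : IsGradedMap dβ deg ψ) :
    IsGradedMap (Sum.elim dα dβ) deg (freeCoprod φ ψ) := by
  intro t f
  rw [freeCoprod_apply, freeCoprod_apply, map_add, ← hφ, ← hψ]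
  rfl

theorem IsMinimalCover.freeCoprod {A B C : Submodule S (ι → S)} (hA : IsGradedSubmodule deg A)
    {φ : (α → S) →ₗ[S] (ι → S)} {ψ : (β → S) →ₗ[S] (ι → S)}
    (hφ : IsMinimalCover deg A B dα φ) (hψ : IsMinimalCover deg B C dβ ψ)
    (hle : ∀ s s', dα s ≤ dβ s') :
    IsMinimalCover deg A C (Sum.elim dα dβ) (freeCoprod φ ψ) := by
  have hgraded := hφ.isGradedMap.freeCoprod hψ.isGradedMap
  have minimal_inr (f : α ⊕ β → S) (hf : GradedBetti.freeCoprod φ ψ f ∈ A) (s : β) :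
      constantCoeff (f (Sum.inr s)) = 0 := by
    refine hψ.minimal (f ∘ Sum.inr) ?_ s
    have hmap : f ∘ Sum.inr ∈ (A ⊔ LinearMap.range φ).comap ψ := by
      rw [← map_funLeft_inr_comap_freeCoprod]
      exact ⟨f, hf, rfl⟩
    rwa [hφ.sup_range] at hmap
  refine ⟨hgraded, ?_, fun f hf => Sum.rec (fun s => ?_) (minimal_inr f hf)⟩
  · rw [range_freeCoprod, ← sup_assoc, hφ.sup_range, hψ.sup_range]
  · set g := gradedPart (Sum.elim dα dβ) (dα s) f with hg
    have hgA : GradedBetti.freeCoprod φ ψ g ∈ A := by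
      rw [hg, hgraded]
      exact hA _ _ hf
    -- Coordinates of degree `dα s - dβ s' ≤ 0` without constant term vanish.
    have hinr : g ∘ Sum.inr = 0 := by
      ext1 s'
      exact (isHomogElem_gradedPart (Sum.elim dα dβ) (dα s) f (Sum.inr s')).eq_zero_of_nonpos
        (sub_nonpos.mpr (hle s s')) (minimal_inr g hgA s')
    rw [freeCoprod_apply, hinr, map_zero, add_zero] at hgA
    have hinl : constantCoeff (g (Sum.inl s)) = 0 := hφ.minimal _ hgA s
    rwa [hg, gradedPart_apply, Sum.elim_inl, sub_self, constantCoeff_component_zero] at hinl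

theorem card_fiber_sumElim [Finite α] [Finite β] (t : ℤ) :
    Nat.card {s // Sum.elim dα dβ s = t} =
      Nat.card {s // dα s = t} + Nat.card {s // dβ s = t} := by
  rw [Nat.card_congr Equiv.subtypeSum, Nat.card_sum]
  rfl

theorem HasBetti.horseshoe {p : ℕ} : ∀ {ι : Type} {deg : ι → ℤ} {A B C : Submodule S (ι → S)}
    {a c : ℕ → ℤ → ℕ}, IsGradedSubmodule deg A →
    (∀ i t t', a i t ≠ 0 → c i t' ≠ 0 → t ≤ t') →
    HasBetti p deg A B a → HasBetti p deg B C c → HasBetti p deg A C (a + c) := by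
  induction p with
  | zero => exact fun _ _ _ _ => trivial
  | succ p ih =>
    rintro ι deg A B C a c hA hac ⟨α, _, dα, φ, hφ, ha, hkerφ⟩ ⟨β, _, dβ, ψ, hψ, hc, hkerψ⟩
    have hle (s : α) (s' : β) : dα s ≤ dβ s' := by
      refine hac 0 _ _ ?_ ?_
      · exact ha (dα s) ▸ (Nat.card_pos_iff.mpr ⟨⟨⟨s, rfl⟩⟩, inferInstance⟩).ne'
      · exact hc (dβ s') ▸ (Nat.card_pos_iff.mpr ⟨⟨⟨s', rfl⟩⟩, inferInstance⟩).ne'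
    have hcover := hφ.freeCoprod hA hψ hle
    refine ⟨α ⊕ β, inferInstance, Sum.elim dα dβ, freeCoprod φ ψ, hcover, fun t => ?_, ?_⟩
    · rw [card_fiber_sumElim, ha, hc]
      rfl
    have hK := hA.comap hcover.isGradedMap
    have hsub : HasBetti p (Sum.elim dα dβ) ⊥ ((A.comap φ).map (extendInl α β))
        fun i => a (i + 1) := by
      rw [← bot_sup_eq (Submodule.map _ _)]
      refine HasBetti.sup_map (isGradedMap_extendInl dα dβ) ?_
      rwa [Submodule.comap_bot, ker_extendInl, inf_bot_eq]
    have hquot : HasBetti p (Sum.elim dα dβ) ((A.comap φ).map (extendInl α β))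
        (A.comap (freeCoprod φ ψ)) fun i => c (i + 1) := by
      rw [← comap_freeCoprod_inf_ker]
      refine HasBetti.of_sup_map (isGradedMap_funLeft_inr dα dβ) hK (isGradedSubmodule_bot dβ) ?_
      rwa [bot_sup_eq, map_funLeft_inr_comap_freeCoprod, hφ.sup_range]
    exact ih (isGradedSubmodule_bot _) (fun i => hac (i + 1)) hsub hquot

end Horseshoe

section Uniqueness

theorem card_fiber_eq_of_mul_eq_one {K τ m n : Type} [CommRing K] [Nontrivial K]
    [Fintype m] [Fintype n] [DecidableEq m] [DecidableEq n] {M : Matrix m n K} {N : Matrix n m K}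
    {f : m → τ} {g : n → τ} (hM : ∀ i j, f i ≠ g j → M i j = 0) (hN : ∀ i j, f i ≠ g j → N j i = 0)
    (hMN : M * N = 1) (hNM : N * M = 1) (t : τ) :
    Nat.card {i // f i = t} = Nat.card {j // g j = t} := by
  classical
  have hMt : (M.toBlock (f · = t) fun j => ¬g j = t) = 0 := by
    ext i j
    exact hM _ _ fun h => j.2 (h.symm.trans i.2)
  have hNt : (N.toBlock (g · = t) fun i => ¬f i = t) = 0 := by
    ext j i
    exact hN _ _ fun h => i.2 (h.trans j.2)
  rw [Nat.card_eq_fintype_card, Nat.card_eq_fintype_card]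
  refine Matrix.square_of_invertible (M.toBlock (f · = t) (g · = t))
    (N.toBlock (g · = t) (f · = t)) ?_ ?_
  · rw [← Matrix.toBlock_one_self, ← hMN, Matrix.toBlock_mul_eq_add _ (g · = t) _ M N, hMt,
      Matrix.zero_mul, add_zero]
  · rw [← Matrix.toBlock_one_self, ← hNM, Matrix.toBlock_mul_eq_add _ (f · = t) _ N M, hNt,
      Matrix.zero_mul, add_zero]

variable {ι κ κ' κ'' : Type}

section ConstantMatrix

variable [Fintype κ] [DecidableEq κ]

/-- The matrix of a map of free modules modulo the irrelevant ideal. -/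
def constantMatrix (φ : (κ → S) →ₗ[S] (κ' → S)) : Matrix κ' κ R :=
  (LinearMap.toMatrix' φ).map constantCoeff

theorem constantMatrix_comp [Fintype κ'] [DecidableEq κ'] (φ : (κ' → S) →ₗ[S] (κ'' → S))
    (ψ : (κ → S) →ₗ[S] (κ' → S)) :
    constantMatrix (φ ∘ₗ ψ) = constantMatrix φ * constantMatrix ψ := by
  rw [constantMatrix, LinearMap.toMatrix'_comp, Matrix.map_mul]
  rfl

theorem constantMatrix_eq_one {φ : (κ → S) →ₗ[S] (κ → S)}
    (hφ : ∀ f s, constantCoeff ((f - φ f) s) = 0) : constantMatrix φ = 1 := by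
  ext s s'
  rw [constantMatrix, Matrix.map_apply, LinearMap.toMatrix'_apply, ← sub_eq_zero.mp
    ((map_sub constantCoeff _ _).symm.trans (hφ (Pi.single s' 1) s)), Matrix.one_apply,
    Pi.single_apply]
  split_ifs <;> simp

theorem IsGradedMap.isHomog_toMatrix' {dg : κ → ℤ} {dg' : κ' → ℤ} {φ : (κ → S) →ₗ[S] (κ' → S)}
    (hφ : IsGradedMap dg dg' φ) (s' : κ') (s : κ) :
    IsHomog (LinearMap.toMatrix' φ s' s) (dg s - dg' s') := by
  rw [LinearMap.toMatrix'_apply]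
  exact hφ.isHomogElem (isHomogElem_single dg s) s'

theorem IsGradedMap.constantMatrix_eq_zero {dg : κ → ℤ} {dg' : κ' → ℤ}
    {φ : (κ → S) →ₗ[S] (κ' → S)} (hφ : IsGradedMap dg dg' φ) {s' : κ'} {s : κ}
    (h : dg s ≠ dg' s') : constantMatrix φ s' s = 0 :=
  constantCoeff_eq_zero (hφ.isHomog_toMatrix' s' s) (sub_ne_zero.mpr h)

theorem IsGradedMap.isHomog_det {dg : κ → ℤ} {φ : (κ → S) →ₗ[S] (κ → S)}
    (hφ : IsGradedMap dg dg φ) : IsHomog (LinearMap.toMatrix' φ).det 0 := by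
  rw [Matrix.det_apply]
  refine IsWeightedHomogeneous.sum _ _ _ fun π _ => ?_
  have hprod := IsWeightedHomogeneous.prod Finset.univ _ _
    fun s _ => hφ.isHomog_toMatrix' (π s) s
  rw [Finset.sum_sub_distrib, Equiv.sum_comp π dg, sub_self] at hprod
  rcases Int.units_eq_one_or π.sign with h | h <;> rw [h]
  · rwa [one_smul]
  · rw [Units.neg_smul, one_smul]
    exact hprod.neg

theorem IsGradedMap.bijective {dg : κ → ℤ} {φ : (κ → S) →ₗ[S] (κ → S)}
    (hφ : IsGradedMap dg dg φ) (h : constantMatrix φ = 1) : Function.Bijective φ := by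
  have hdet : LinearMap.det φ = 1 := by
    rw [← LinearMap.det_toMatrix', hφ.isHomog_det.eq_C, RingHom.map_det, RingHom.mapMatrix_apply,
      ← constantMatrix, h, Matrix.det_one, C_1]
  rw [← Module.End.isUnit_iff, LinearMap.isUnit_iff_isUnit_det, hdet]
  exact isUnit_one

end ConstantMatrix

theorem IsMinimalCover.exists_equiv [Nontrivial R] [Finite κ] [Finite κ'] {deg : ι → ℤ}
    {A B : Submodule S (ι → S)} (hA : IsGradedSubmodule deg A) {dg : κ → ℤ} {dg' : κ' → ℤ}
    {ψ : (κ → S) →ₗ[S] (ι → S)} {ψ' : (κ' → S) →ₗ[S] (ι → S)}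
    (hψ : IsMinimalCover deg A B dg ψ) (hψ' : IsMinimalCover deg A B dg' ψ') :
    (∀ t, Nat.card {s // dg s = t} = Nat.card {s // dg' s = t}) ∧
      ∃ l : (κ → S) →ₗ[S] (κ' → S), IsGradedMap dg dg' l ∧ Function.Bijective l ∧
        ∀ f, ψ f - ψ' (l f) ∈ A := by
  classical
  cases nonempty_fintype κ
  cases nonempty_fintype κ'
  obtain ⟨l, hl, -, hψl⟩ := hψ.isGradedMap.exists_lift hψ'.isGradedMap (isGradedSubmodule_top dg')
    hA (by rw [Submodule.map_top, hψ'.sup_range, ← hψ.sup_range]; exact le_sup_right)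
  obtain ⟨l', hl', -, hψl'⟩ := hψ'.isGradedMap.exists_lift hψ.isGradedMap
    (isGradedSubmodule_top dg) hA
    (by rw [Submodule.map_top, hψ.sup_range, ← hψ'.sup_range]; exact le_sup_right)
  have hone : constantMatrix (l' ∘ₗ l) = 1 := constantMatrix_eq_one fun f => hψ.minimal _ <| by
    simpa using add_mem (hψl f) (hψl' (l f))
  have hone' : constantMatrix (l ∘ₗ l') = 1 := constantMatrix_eq_one fun f => hψ'.minimal _ <| by
    simpa using add_mem (hψl' f) (hψl (l' f))
  refine ⟨card_fiber_eq_of_mul_eq_one (M := constantMatrix l') (N := constantMatrix l)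
      (fun s s' h => hl'.constantMatrix_eq_zero h.symm)
      (fun s s' h => hl.constantMatrix_eq_zero h)
      (constantMatrix_comp l' l ▸ hone) (constantMatrix_comp l l' ▸ hone'), l, hl, ⟨?_, ?_⟩, hψl⟩
  · exact Function.Injective.of_comp ((hl'.comp hl).bijective hone).injective
  · exact Function.Surjective.of_comp ((hl.comp hl').bijective hone').surjective

theorem HasBetti.unique [Nontrivial R] {p : ℕ} : ∀ {ι : Type} {deg : ι → ℤ}
    {A B : Submodule S (ι → S)} {b b' : ℕ → ℤ → ℕ}, IsGradedSubmodule deg A →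
    HasBetti p deg A B b → HasBetti p deg A B b' → ∀ i < p, b i = b' i := by
  induction p with
  | zero => exact fun _ _ _ i hi => absurd hi i.not_lt_zero
  | succ p ih =>
    rintro ι deg A B b b' hA ⟨κ, _, dg, ψ, hψ, hb, hker⟩ ⟨κ', _, dg', ψ', hψ', hb', hker'⟩ i hi
    obtain ⟨hcard, l, hl, hbij, hψl⟩ := hψ.exists_equiv hA hψ'
    cases i with
    | zero => exact funext fun t => by rw [← hb, ← hb', hcard]
    | succ i =>
      have hcomap : (A.comap ψ').comap l = A.comap ψ := by
        ext f
        rw [Submodule.mem_comap, Submodule.mem_comap, Submodule.mem_comap,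
          ← Submodule.add_mem_iff_right A (hψl f), sub_add_cancel]
      have hmap : HasBetti p dg' ⊥ (⊥ ⊔ (A.comap ψ).map l) fun i => b (i + 1) := by
        refine HasBetti.sup_map hl ?_
        rwa [Submodule.comap_bot, LinearMap.ker_eq_bot.mpr hbij.injective, inf_bot_eq]
      rw [bot_sup_eq, ← hcomap, Submodule.map_comap_eq_of_surjective hbij.surjective] at hmap
      exact ih (isGradedSubmodule_bot dg') hmap hker' i (Nat.lt_of_succ_lt_succ hi)

end Uniqueness

section LinearStrand

/-- The table of a linear resolution generated in degree `d`: the `b i` generators of homological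
degree `i` all have total degree `i + d`. -/
def linearStrand (d : ℤ) (b : ℕ → ℕ) : ℕ → ℤ → ℕ :=
  fun i t => if t = i + d then b i else 0

theorem linearStrand_add (d : ℤ) (b c : ℕ → ℕ) :
    linearStrand d b + linearStrand d c = linearStrand d fun i => b i + c i := by
  funext i t
  simp only [Pi.add_apply, linearStrand, ite_add_ite, add_zero]

theorem linearStrand_zero (d : ℤ) : linearStrand d (fun _ => 0) = 0 :=
  funext₂ fun _ _ => ite_self 0

theorem linearStrand_succ (d : ℤ) (b : ℕ → ℕ) :
    (fun i => linearStrand d b (i + 1)) = linearStrand (d + 1) fun i => b (i + 1) := by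
  funext i t
  exact if_congr (by push_cast; omega) rfl rfl

variable {ι : Type} {deg : ι → ℤ} {A B C : Submodule (MvPolynomial σ R) (ι → MvPolynomial σ R)}
  {p : ℕ}

theorem HasBetti.refl (p : ℕ) {ι : Type} (deg : ι → ℤ) (A : Submodule S (ι → S)) :
    HasBetti p deg A A 0 := by
  induction p generalizing ι with
  | zero => trivial
  | succ p ih =>
    refine ⟨Empty, inferInstance, Empty.elim, 0, ⟨fun _ _ => by simp, ?_, fun _ _ => nofun⟩,
      fun t => Nat.card_of_isEmpty, ?_⟩
    · rw [LinearMap.range_zero, sup_bot_eq]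
    · rw [Subsingleton.elim (A.comap 0) ⊥]
      exact ih Empty.elim ⊥

theorem HasBetti.horseshoe_linearStrand {d d' : ℤ} {a c : ℕ → ℕ} (hd : d ≤ d')
    (hA : IsGradedSubmodule deg A) (h : HasBetti p deg A B (linearStrand d a))
    (h' : HasBetti p deg B C (linearStrand d' c)) :
    HasBetti p deg A C (linearStrand d a + linearStrand d' c) := by
  refine h.horseshoe hA (fun i t t' ht ht' => ?_) h'
  have := (ite_ne_right_iff.mp ht).1
  have := (ite_ne_right_iff.mp ht').1
  omega

end LinearStrand

section Ideals

variable {p : ℕ}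

/-- An ideal as a submodule of the free module of rank one. -/
def ofIdeal (I : Ideal S) : Submodule S (Unit → S) :=
  Submodule.comap (LinearMap.proj ()) I

theorem mem_ofIdeal {I : Ideal S} {f : Unit → S} : f ∈ ofIdeal I ↔ f () ∈ I :=
  Iff.rfl

theorem ofIdeal_bot : ofIdeal (⊥ : Ideal S) = ⊥ := by
  ext f
  exact ⟨fun h => _root_.funext fun _ => h, fun h => congrFun h ()⟩

theorem HasBetti.quotient {P : Ideal S} (hP : ∀ q ∈ P, constantCoeff q = 0) {d : ℤ} {b : ℕ → ℕ}
    (hb : b 0 = 1)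
    (h : ∀ p, HasBetti p (fun _ => d) ⊥ (ofIdeal P) (linearStrand (d + 1) fun i => b (i + 1)))
    (p : ℕ) : HasBetti p (fun _ => d) (ofIdeal P) ⊤ (linearStrand d b) := by
  cases p with
  | zero => trivial
  | succ p =>
    refine ⟨Unit, inferInstance, fun _ => d, LinearMap.id,
      ⟨fun _ _ => rfl, ?_, fun f hf s => hP (f s) hf⟩, fun t => ?_, ?_⟩
    · rw [LinearMap.range_id, sup_top_eq]
    · by_cases ht : d = t
      · simp [linearStrand, ht, hb]
      · simp [linearStrand, ht, Ne.symm ht]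
    · rw [Submodule.comap_id, linearStrand_succ]
      exact h p

theorem HasBetti.sup_span_singleton {N : Ideal S} {v : S} {c d : ℤ} (hv : IsHomog v c)
    {b : ℕ → ℤ → ℕ} (h : HasBetti p (fun _ => d + c) (ofIdeal (N.colon {v})) ⊤ b) :
    HasBetti p (fun _ => d) (ofIdeal N) (ofIdeal (N ⊔ Ideal.span {v})) b := by
  have hgraded : IsGradedMap (fun _ : Unit => d + c) (fun _ : Unit => d)
      (LinearMap.lsmul S (Unit → S) v) := by
    intro t f
    ext1 u
    simp only [LinearMap.lsmul_apply, Pi.smul_apply, smul_eq_mul, gradedPart_apply]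
    rw [mul_comm v, mul_comm v, component_mul hv, sub_sub]
  have hmap : ofIdeal (N ⊔ Ideal.span {v}) =
      ofIdeal N ⊔ (⊤ : Submodule S (Unit → S)).map (LinearMap.lsmul S (Unit → S) v) := by
    ext f
    rw [mem_ofIdeal, Submodule.mem_sup, Submodule.mem_sup]
    constructor
    · rintro ⟨y, hy, z, hz, hf⟩
      obtain ⟨q, rfl⟩ := Ideal.mem_span_singleton.mp hz
      exact ⟨fun _ => y, hy, _, ⟨fun _ => q, trivial, rfl⟩, funext fun _ => hf⟩
    · rintro ⟨y, hy, -, ⟨g, -, rfl⟩, rfl⟩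
      exact ⟨y (), hy, v * g (), Ideal.mul_mem_right _ _ (Ideal.mem_span_singleton_self v), rfl⟩
  have hcolon : ofIdeal (N.colon {v}) =
      ⊤ ⊓ (ofIdeal N).comap (LinearMap.lsmul S (Unit → S) v) := by
    ext f
    simp [mem_ofIdeal, Submodule.mem_colon_singleton, mul_comm v]
  rw [hmap]
  exact HasBetti.sup_map hgraded (hcolon ▸ h)

theorem HasBetti.sup_span_singleton_linearStrand {N P : Ideal S} {v : S} {c d s : ℤ}
    {a b : ℕ → ℕ} (hv : IsHomog v c) (hcolon : N.colon {v} = P) (hs : s ≤ d + c)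
    (hN : HasBetti p (fun _ => d) ⊥ (ofIdeal N) (linearStrand s a))
    (hP : HasBetti p (fun _ => d + c) (ofIdeal P) ⊤ (linearStrand (d + c) b)) :
    HasBetti p (fun _ => d) ⊥ (ofIdeal (N ⊔ Ideal.span {v}))
      (linearStrand s a + linearStrand (d + c) b) :=
  hN.horseshoe_linearStrand hs (isGradedSubmodule_bot _)
    (HasBetti.sup_span_singleton hv (hcolon ▸ hP))

end Ideals

section MonomialIdeals

variable (R) in
/-- The ideal generated by the monomials with exponent vectors in `T`. -/
def monomialIdeal (T : Set (σ →₀ ℕ)) : Ideal S :=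
  Ideal.span ((fun m => monomial m 1) '' T)

theorem monomialIdeal_empty : monomialIdeal R (∅ : Set (σ →₀ ℕ)) = ⊥ := by
  rw [monomialIdeal, Set.image_empty, Ideal.span_empty]

theorem monomialIdeal_insert (m : σ →₀ ℕ) (T : Set (σ →₀ ℕ)) :
    monomialIdeal R (insert m T) = monomialIdeal R T ⊔ Ideal.span {monomial m 1} := by
  rw [monomialIdeal, Set.image_insert_eq, Ideal.span_insert, sup_comm]
  rfl

theorem isHomog_monomial (m : σ →₀ ℕ) : IsHomog (monomial m (1 : R)) (m.degree : ℤ) :=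
  isWeightedHomogeneous_monomial _ m 1 (weight_one_eq_degree m)

theorem constantCoeff_eq_zero_of_mem_span_X {A : Set σ} {q : S}
    (hq : q ∈ Ideal.span (X '' A)) : constantCoeff q = 0 := by
  by_contra h
  obtain ⟨i, -, hi⟩ := mem_ideal_span_X_image.mp hq 0 (mem_support_iff.mpr h)
  exact hi rfl

theorem colon_monomial_eq_span_X {T : Set (σ →₀ ℕ)} {m : σ →₀ ℕ} {A : Set σ}
    (h : ∀ x, (∃ q ∈ T, q ≤ x + m) ↔ ∃ i ∈ A, x i ≠ 0) :
    (monomialIdeal R T).colon {monomial m 1} = Ideal.span (X '' A) := by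
  ext f
  rw [Submodule.mem_colon_singleton, smul_eq_mul, monomialIdeal, mem_ideal_span_monomial_image,
    mem_ideal_span_X_image]
  constructor
  · intro hf x hx
    refine (h x).mp (hf (x + m) ?_)
    rwa [mem_support_iff, coeff_mul_monomial, mul_one, ← mem_support_iff]
  · intro hf y hy
    rw [mem_support_iff, coeff_mul_monomial', ne_eq, ite_eq_right_iff, Classical.not_imp,
      mul_one, ← ne_eq, ← mem_support_iff] at hy
    obtain ⟨q, hq, hle⟩ := (h (y - m)).mpr (hf _ hy.2)
    exact ⟨q, hq, tsub_add_cancel_of_le hy.1 ▸ hle⟩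

end MonomialIdeals

section Koszul

theorem colon_X_span_X {A : Set σ} {a : σ} (ha : a ∉ A) :
    (Ideal.span (X '' A) : Ideal S).colon {X a} = Ideal.span (X '' A) := by
  classical
  have hspan : Ideal.span (X '' A) = monomialIdeal R ((fun i => Finsupp.single i 1) '' A) := by
    rw [monomialIdeal, Set.image_image]
    rfl
  conv_lhs => rw [hspan]
  refine colon_monomial_eq_span_X fun x => ?_
  rw [Set.exists_mem_image]
  refine exists_congr fun i => and_congr_right fun hi => ?_
  have hai : a ≠ i := fun h => ha (h ▸ hi)
  rw [Finsupp.single_le_iff, Finsupp.add_apply, Finsupp.single_eq_of_ne' hai]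
  omega

theorem hasBetti_span_X (A : Finset σ) (d : ℤ) (p : ℕ) :
    HasBetti p (fun _ => d) ⊥ (ofIdeal (Ideal.span (X '' (A : Set σ)) : Ideal S))
      (linearStrand (d + 1) fun i => A.card.choose (i + 1)) := by
  classical
  induction A using Finset.induction_on generalizing d p with
  | empty =>
    simp only [Finset.coe_empty, Set.image_empty, Ideal.span_empty, ofIdeal_bot,
      Finset.card_empty, Nat.choose_zero_succ, linearStrand_zero]
    exact HasBetti.refl p _ ⊥
  | insert a A ha ih =>
    have hpascal : linearStrand (d + 1) (fun i => (insert a A).card.choose (i + 1)) =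
        linearStrand (d + 1) (fun i => A.card.choose (i + 1)) +
          linearStrand (d + 1) A.card.choose := by
      rw [linearStrand_add, Finset.card_insert_of_notMem ha]
      exact congrArg _ (_root_.funext fun i => by rw [Nat.choose_succ_succ, add_comm])
    rw [Finset.coe_insert, Set.image_insert_eq, Ideal.span_insert, sup_comm, hpascal]
    exact HasBetti.sup_span_singleton_linearStrand (isWeightedHomogeneous_X R _ a)
      (colon_X_span_X (mod_cast ha)) le_rfl (ih d p)
      (HasBetti.quotient (fun _ => constantCoeff_eq_zero_of_mem_span_X)
        (Nat.choose_zero_right _) (ih (d + 1)) p)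

theorem hasBetti_quotient_span_X (A : Finset σ) (d : ℤ) (p : ℕ) :
    HasBetti p (fun _ => d) (ofIdeal (Ideal.span (X '' (A : Set σ)) : Ideal S)) ⊤
      (linearStrand d A.card.choose) :=
  HasBetti.quotient (fun _ => constantCoeff_eq_zero_of_mem_span_X)
    (Nat.choose_zero_right _) (hasBetti_span_X A d) p

end Koszul

section LinearQuotients

theorem hasBetti_monomialIdeal_of_linearQuotients {α : Type} [LinearOrder α]
    {key : (σ →₀ ℕ) → α} (hkey : Function.Injective key) {V : (σ →₀ ℕ) → Finset σ} {s : ℕ}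
    (T : Finset (σ →₀ ℕ)) (hdeg : ∀ m ∈ T, m.degree = s)
    (hcolon : ∀ m ∈ T, ∀ x, (∃ q ∈ T, key m < key q ∧ q ≤ x + m) ↔ ∃ i ∈ V m, x i ≠ 0) (p : ℕ) :
    HasBetti p (fun _ => 0) ⊥ (ofIdeal (monomialIdeal R (T : Set (σ →₀ ℕ))))
      (linearStrand s fun i => ∑ q ∈ T, (V q).card.choose i) := by
  classical
  induction T using Finset.induction_on_min_value key with
  | empty =>
    simp only [Finset.coe_empty, monomialIdeal_empty, ofIdeal_bot, Finset.sum_empty,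
      linearStrand_zero]
    exact HasBetti.refl p _ ⊥
  | insert m T hm hmin ih =>
    rw [Finset.forall_mem_insert] at hdeg hcolon
    have hlt (q : σ →₀ ℕ) (hq : q ∈ T) : key m < key q :=
      (hmin q hq).lt_of_ne fun h => hm (hkey h ▸ hq)
    have hcolon_m : (monomialIdeal R (T : Set (σ →₀ ℕ))).colon {monomial m 1} =
        Ideal.span (X '' (V m : Set σ)) := by
      refine colon_monomial_eq_span_X fun x => (Iff.trans ?_ (hcolon.1 x))
      simp only [Finset.exists_mem_insert, lt_irrefl, false_and, false_or, Finset.mem_coe]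
      exact exists_congr fun q => and_congr_right fun hq => (and_iff_right (hlt q hq)).symm
    have hT := ih hdeg.2 fun q hq x => by
      rw [← hcolon.2 q hq x, Finset.exists_mem_insert, or_iff_right]
      exact fun h => (hmin q hq).not_gt h.1
    have hsum : linearStrand s (fun i => ∑ q ∈ insert m T, (V q).card.choose i) =
        linearStrand s (fun i => ∑ q ∈ T, (V q).card.choose i) +
          linearStrand (0 + (s : ℤ)) (V m).card.choose := by
      rw [zero_add, linearStrand_add]
      exact congrArg _ (_root_.funext fun i => by rw [Finset.sum_insert hm, add_comm])
    rw [Finset.coe_insert, monomialIdeal_insert, hsum]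
    exact HasBetti.sup_span_singleton_linearStrand (hdeg.1 ▸ isHomog_monomial m) hcolon_m
      (zero_add _).ge hT (hasBetti_quotient_span_X (V m) _ p)

end LinearQuotients

section Powers

theorem eq_of_le_of_degree_eq {m q : σ →₀ ℕ} (hle : m ≤ q) (hdeg : m.degree = q.degree) :
    m = q := by
  have h : (q - m).degree + m.degree = q.degree := by rw [← map_add, tsub_add_cancel_of_le hle]
  have hzero : q - m = 0 := (Finsupp.degree_eq_zero_iff _).mp (by omega)
  exact hle.antisymm (tsub_eq_zero_iff_le.mp hzero)

theorem mem_finsuppAntidiag_iff_degree [DecidableEq σ] {A : Finset σ} {s : ℕ} {m : σ →₀ ℕ} :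
    m ∈ A.finsuppAntidiag s ↔ m.degree = s ∧ m.support ⊆ A := by
  rw [Finset.mem_finsuppAntidiag, and_congr_left_iff]
  intro h
  rw [Finsupp.degree_apply, Finset.sum_subset h fun i _ => Finsupp.notMem_support_iff.mp]

theorem span_X_pow [DecidableEq σ] (A : Finset σ) (s : ℕ) :
    (Ideal.span (X '' (A : Set σ)) : Ideal S) ^ s = monomialIdeal R (A.finsuppAntidiag s) := by
  rw [Ideal.span, Submodule.span_pow, Finsupp.image_pow_eq_finsuppProd_image, monomialIdeal]
  congr 1
  ext q
  simp [monomial_eq, ← mem_finsuppAntidiag_iff_degree]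

variable [LinearOrder σ]

/-- The variables of `A` below some variable of the monomial `m`. They generate the colon ideal by
`m` of the lexicographically larger monomials of the same degree in the variables of `A`. -/
def varsBelow (A : Finset σ) (m : σ →₀ ℕ) : Finset σ :=
  open Classical in {i ∈ A | ∃ j, i < j ∧ m j ≠ 0}

theorem mem_varsBelow {A : Finset σ} {m : σ →₀ ℕ} {i : σ} :
    i ∈ varsBelow A m ↔ i ∈ A ∧ ∃ j, i < j ∧ m j ≠ 0 := by
  simp only [varsBelow, Finset.mem_filter]

theorem exists_mem_varsBelow_of_toLex_lt {A : Finset σ} {m q x : σ →₀ ℕ} (hq : q.support ⊆ A)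
    (hdeg : q.degree = m.degree) (hlt : toLex m < toLex q) (hle : q ≤ x + m) :
    ∃ i ∈ varsBelow A m, x i ≠ 0 := by
  obtain ⟨i, heq, hi⟩ := Finsupp.Lex.lt_iff.mp hlt
  simp only [ofLex_toLex] at heq hi
  have hle_i : q i ≤ x i + m i := hle i
  refine ⟨i, mem_varsBelow.mpr ⟨hq (Finsupp.mem_support_iff.mpr (by omega)), ?_⟩, by omega⟩
  by_contra! hm
  have hmq : m ≤ q := fun j => by
    rcases lt_trichotomy j i with h | rfl | h
    · exact (heq j h).le
    · exact hi.le
    · exact (hm j h).symm ▸ Nat.zero_le _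
  exact hi.ne (DFunLike.congr_fun (eq_of_le_of_degree_eq hmq hdeg.symm) i)

theorem exists_toLex_lt_of_mem_varsBelow {A : Finset σ} {m x : σ →₀ ℕ} (hm : m.support ⊆ A) {i : σ}
    (hi : i ∈ varsBelow A m) (hx : x i ≠ 0) :
    ∃ q : σ →₀ ℕ, q.support ⊆ A ∧ q.degree = m.degree ∧ toLex m < toLex q ∧ q ≤ x + m := by
  classical
  obtain ⟨hiA, j, hij, hj⟩ := mem_varsBelow.mp hi
  have hjm : Finsupp.single j 1 ≤ m := Finsupp.single_le_iff.mpr (Nat.one_le_iff_ne_zero.mpr hj)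
  refine ⟨m - Finsupp.single j 1 + Finsupp.single i 1, ?_, ?_, ?_, ?_⟩
  · refine Finsupp.support_add.trans (Finset.union_subset (Finsupp.support_tsub.trans hm) ?_)
    exact Finsupp.support_single_subset.trans (Finset.singleton_subset_iff.mpr hiA)
  · conv_rhs => rw [← tsub_add_cancel_of_le hjm]
    rw [map_add, map_add, Finsupp.degree_single, Finsupp.degree_single]
  · refine Finsupp.Lex.lt_iff.mpr ⟨i, fun l hl => ?_, ?_⟩
    · simp [Finsupp.single_eq_of_ne hl.ne, Finsupp.single_eq_of_ne (hl.trans hij).ne]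
    · simp [Finsupp.single_eq_of_ne hij.ne]
  · rw [add_comm x]
    exact add_le_add tsub_le_self (Finsupp.single_le_iff.mpr (Nat.one_le_iff_ne_zero.mpr hx))

theorem lex_colon {A : Finset σ} {s : ℕ} {m : σ →₀ ℕ} (hm : m ∈ A.finsuppAntidiag s)
    (x : σ →₀ ℕ) :
    (∃ q ∈ A.finsuppAntidiag s, toLex m < toLex q ∧ q ≤ x + m) ↔
      ∃ i ∈ varsBelow A m, x i ≠ 0 := by
  simp only [mem_finsuppAntidiag_iff_degree] at hm ⊢
  constructor
  · rintro ⟨q, ⟨hdeg, hq⟩, hlt, hle⟩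
    exact exists_mem_varsBelow_of_toLex_lt hq (hdeg.trans hm.1.symm) hlt hle
  · rintro ⟨i, hi, hx⟩
    obtain ⟨q, hq, hdeg, hlt, hle⟩ := exists_toLex_lt_of_mem_varsBelow hm.2 hi hx
    exact ⟨q, ⟨hdeg.trans hm.1, hq⟩, hlt, hle⟩

theorem hasBetti_span_X_pow (A : Finset σ) (s p : ℕ) :
    HasBetti p (fun _ => 0) ⊥ (ofIdeal (Ideal.span (X '' (A : Set σ)) ^ s : Ideal S))
      (linearStrand s fun i => ∑ q ∈ A.finsuppAntidiag s, (varsBelow A q).card.choose i) := by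
  rw [span_X_pow]
  exact hasBetti_monomialIdeal_of_linearQuotients toLex.injective _
    (fun m hm => (mem_finsuppAntidiag_iff_degree.mp hm).1) (fun m hm => lex_colon hm) p

end Powers

section Counting

theorem card_finsuppAntidiag_insert_sdiff [DecidableEq σ] {A : Finset σ} {a : σ} (ha : a ∉ A)
    (r : ℕ) : ((insert a A).finsuppAntidiag (r + 1) \ A.finsuppAntidiag (r + 1)).card =
      (A.card + r).choose r := by
  rw [Finset.card_sdiff_of_subset (Finset.finsuppAntidiag_mono (Finset.subset_insert a A) _),
    Finset.card_finsuppAntidiag_nat_eq_choose, Finset.card_finsuppAntidiag_nat_eq_choose,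
    Finset.card_insert_of_notMem ha, ← add_assoc, ← add_assoc, Nat.add_sub_cancel,
    Nat.add_sub_cancel, add_right_comm, Nat.choose_succ_succ, Nat.add_sub_cancel]

theorem choose_add_mul_choose (n r i : ℕ) :
    (n + r).choose (i + r) * (r + i).choose r = (n + r).choose r * n.choose i := by
  rcases le_or_gt i n with - | hi
  · rw [add_comm r i, Nat.choose_mul (Nat.le_add_left r i), Nat.add_sub_cancel, Nat.add_sub_cancel]
  · rw [Nat.choose_eq_zero_of_lt hi, Nat.choose_eq_zero_of_lt (by omega), zero_mul, mul_zero]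

variable [LinearOrder σ]

theorem varsBelow_insert_of_support_subset {A : Finset σ} {a : σ} (ha : ∀ i ∈ A, i < a)
    {q : σ →₀ ℕ} (hq : q.support ⊆ A) : varsBelow (insert a A) q = varsBelow A q := by
  ext i
  rw [mem_varsBelow, mem_varsBelow, Finset.mem_insert]
  refine ⟨fun ⟨hi, j, hij, hj⟩ => ⟨hi.resolve_left ?_, j, hij, hj⟩, fun h => ⟨.inr h.1, h.2⟩⟩
  rintro rfl
  exact hij.not_gt (ha j (hq (Finsupp.mem_support_iff.mpr hj)))

theorem varsBelow_insert_of_apply_ne_zero {A : Finset σ} {a : σ} (ha : ∀ i ∈ A, i < a)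
    {q : σ →₀ ℕ} (hq : q.support ⊆ insert a A) (hqa : q a ≠ 0) : varsBelow (insert a A) q = A := by
  ext i
  rw [mem_varsBelow, Finset.mem_insert]
  refine ⟨fun ⟨hi, j, hij, hj⟩ => hi.resolve_left ?_, fun h => ⟨.inr h, a, ha i h, hqa⟩⟩
  rintro rfl
  rcases Finset.mem_insert.mp (hq (Finsupp.mem_support_iff.mpr hj)) with rfl | h
  · exact lt_irrefl _ hij
  · exact hij.not_gt (ha j h)

theorem sum_choose_card_varsBelow (A : Finset σ) (r i : ℕ) :
    ∑ q ∈ A.finsuppAntidiag (r + 1), (varsBelow A q).card.choose i =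
      (A.card + r).choose (i + r + 1) * (r + i).choose r := by
  induction A using Finset.induction_on_max with
  | empty =>
    rw [Finset.finsuppAntidiag_empty_of_ne_zero r.succ_ne_zero, Finset.sum_empty,
      Finset.card_empty, Nat.choose_eq_zero_of_lt (by omega), zero_mul]
  | insert a A ha ih =>
    have haA : a ∉ A := fun h => lt_irrefl a (ha a h)
    have hold (q : σ →₀ ℕ) (hq : q ∈ A.finsuppAntidiag (r + 1)) :
        (varsBelow (insert a A) q).card.choose i = (varsBelow A q).card.choose i := by
      rw [varsBelow_insert_of_support_subset ha (mem_finsuppAntidiag_iff_degree.mp hq).2]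
    have hnew (q : σ →₀ ℕ)
        (hq : q ∈ (insert a A).finsuppAntidiag (r + 1) \ A.finsuppAntidiag (r + 1)) :
        (varsBelow (insert a A) q).card.choose i = A.card.choose i := by
      simp only [Finset.mem_sdiff, mem_finsuppAntidiag_iff_degree, not_and] at hq
      obtain ⟨⟨hdeg, hsupp⟩, hnot⟩ := hq
      rw [varsBelow_insert_of_apply_ne_zero ha hsupp fun hqa => hnot hdeg fun j hj => ?_]
      exact Finset.mem_of_mem_insert_of_ne (hsupp hj)
        fun h => Finsupp.mem_support_iff.mp hj (h ▸ hqa)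
    rw [← Finset.sum_sdiff (Finset.finsuppAntidiag_mono (Finset.subset_insert a A) _),
      Finset.sum_congr rfl hold, Finset.sum_congr rfl hnew, Finset.sum_const, ih, smul_eq_mul,
      card_finsuppAntidiag_insert_sdiff haA, ← choose_add_mul_choose, ← add_mul,
      Finset.card_insert_of_notMem haA, add_right_comm A.card, Nat.choose_succ_succ]

end Counting

section MainTable

theorem colon_monomial_span_X_pow {A : Finset σ} {u v : σ →₀ ℕ} (hu : u.support ⊆ A)
    (hv : ∀ i ∈ A, v i = 0) :
    ((Ideal.span (X '' (A : Set σ)) : Ideal S) ^ (u.degree + 1)).colon {monomial (u + v) 1} =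
      Ideal.span (X '' (A : Set σ)) := by
  classical
  rw [span_X_pow]
  refine colon_monomial_eq_span_X fun x => ?_
  simp only [Finset.mem_coe, mem_finsuppAntidiag_iff_degree]
  constructor
  · rintro ⟨q, ⟨hdeg, hq⟩, hle⟩
    by_contra! hx
    have hqu : q ≤ u := fun i => by
      by_cases hi : i ∈ A
      · simpa [hx i hi, hv i hi] using hle i
      · rw [Finsupp.notMem_support_iff.mp fun h => hi (hq h)]
        exact Nat.zero_le _
    have := Finsupp.degree_mono hqu
    omega
  · rintro ⟨i, hi, hx⟩
    refine ⟨u + Finsupp.single i 1, ⟨?_, ?_⟩, ?_⟩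
    · rw [map_add, Finsupp.degree_single]
    · exact Finsupp.support_add.trans (Finset.union_subset hu
        (Finsupp.support_single_subset.trans (Finset.singleton_subset_iff.mpr hi)))
    · rw [add_comm x]
      exact add_le_add le_self_add (Finsupp.single_le_iff.mpr (Nat.one_le_iff_ne_zero.mpr hx))

theorem hasBetti_span_monomial_sup_span_X_pow [LinearOrder σ] {A : Finset σ} {u v : σ →₀ ℕ}
    (hu : u.support ⊆ A) (hv : ∀ i ∈ A, v i = 0) (hv₀ : v ≠ 0) (p : ℕ) :
    HasBetti p (fun _ => 0) ⊥
      (ofIdeal (Ideal.span {monomial (u + v) (1 : R)} ⊔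
        Ideal.span (X '' (A : Set σ)) ^ (u.degree + 1)))
      (linearStrand (u.degree + 1 : ℕ) (fun i =>
          (A.card + u.degree).choose (i + u.degree + 1) * (u.degree + i).choose u.degree) +
        linearStrand (u.degree + v.degree : ℕ) A.card.choose) := by
  have hpow := hasBetti_span_X_pow (R := R) A (u.degree + 1) p
  have hcolon := colon_monomial_span_X_pow (R := R) hu hv
  have hmon := isHomog_monomial (R := R) (u + v)
  simp only [sum_choose_card_varsBelow] at hpow
  rw [map_add] at hmon
  have hdeg : v.degree ≠ 0 := (Finsupp.degree_eq_zero_iff v).not.mpr hv₀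
  have h := HasBetti.sup_span_singleton_linearStrand hmon hcolon (by omega) hpow
    (hasBetti_quotient_span_X A _ p)
  rwa [zero_add, sup_comm] at h

end MainTable

section Resolutions

theorem HasBetti.of_minimalResolution {κ : ℕ → Type} [∀ i, Finite (κ i)] {dg : ∀ i, κ i → ℤ}
    {φ : ∀ i, (κ (i + 1) → S) →ₗ[S] (κ i → S)} (hφ : ∀ i, IsGradedMap (dg (i + 1)) (dg i) (φ i))
    (hφφ : ∀ i, Function.Exact (φ (i + 1)) (φ i))
    (hmin : ∀ i f s, constantCoeff (φ i f s) = 0)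
    {ι : Type} {deg : ι → ℤ} {ψ : (κ 0 → S) →ₗ[S] (ι → S)} (hψ : IsGradedMap (dg 0) deg ψ)
    (hφψ : Function.Exact (φ 0) ψ) (p : ℕ) :
    HasBetti p deg ⊥ (LinearMap.range ψ) fun i t => Nat.card {s // dg i s = t} := by
  induction p generalizing κ ι with
  | zero => trivial
  | succ p ih =>
    refine ⟨κ 0, Fintype.ofFinite _, dg 0, ψ, ⟨hψ, bot_sup_eq _, fun f hf s => ?_⟩,
      fun _ => rfl, ?_⟩
    · obtain ⟨g, rfl⟩ := (hφψ f).mp hf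
      exact hmin 0 g s
    · rw [show Submodule.comap ψ ⊥ = LinearMap.range (φ 0) from hφψ.linearMap_ker_eq]
      exact ih (κ := fun i => κ (i + 1)) (dg := fun i => dg (i + 1)) (φ := fun i => φ (i + 1))
        (fun i => hφ (i + 1)) (fun i => hφφ (i + 1)) (fun i => hmin (i + 1)) (hφ 0) (hφφ 0)

theorem constantCoeff_apply_eq_zero {κ ι : Type} [Finite κ] [DecidableEq κ]
    {φ : (κ → S) →ₗ[S] (ι → S)} {i : ι}
    (hφ : ∀ s, constantCoeff (φ (Pi.single s 1) i) = 0) (f : κ → S) :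
    constantCoeff (φ f i) = 0 := by
  cases nonempty_fintype κ
  rw [pi_eq_sum_univ' f]
  simp [hφ]

variable {k : Type} [Field k]

theorem isHomog_of_homogOfDeg {p : MvPolynomial σ k} {d : ℤ} (hp : Paper.HomogOfDeg k p d) :
    IsHomog p d := by
  rcases hp with rfl | ⟨m, rfl, hp⟩
  · exact isWeightedHomogeneous_zero k _ d
  · exact isHomog_natCast_iff.mpr hp

theorem isHomog_of_mem_idealDeg {N : ℕ} {I : Ideal (MvPolynomial (Fin N) k)} {d : ℤ} {q : I}
    (hq : q ∈ Paper.idealDeg k I d) : IsHomog (q : MvPolynomial (Fin N) k) d := by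
  unfold Paper.idealDeg at hq
  split_ifs at hq with hd
  · rw [← Int.toNat_of_nonneg hd]
    exact isHomog_natCast_iff.mpr hq
  · rw [(Submodule.mem_bot k).mp hq]
    exact isWeightedHomogeneous_zero k _ d

theorem finite_sigma_fin {b : ℤ → ℕ} (hb : (Function.support b).Finite) :
    Finite ((j : ℤ) × Fin (b j)) := by
  have := hb.to_subtype
  refine Finite.of_surjective (α := (j : Function.support b) × Fin (b j))
    (fun x => ⟨x.1, x.2⟩) fun ⟨j, s⟩ => ⟨⟨⟨j, ?_⟩, s⟩, rfl⟩
  exact Nat.ne_zero_of_lt s.isLt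

theorem natCard_sigma_fin (b : ℤ → ℕ) (c t : ℤ) :
    Nat.card {s : (j : ℤ) × Fin (b j) // c + s.1 = t} = b (t - c) := by
  rw [Nat.card_congr (Equiv.subtypeEquivRight fun s => eq_sub_iff_add_eq'.symm),
    Nat.card_congr (Equiv.sigmaSubtype (t - c)), Nat.card_fin]

end Resolutions

section BettiNumbers

variable {k : Type} [Field k] {N : ℕ} {I : Ideal (MvPolynomial (Fin N) k)}
  (res : Paper.MinGradedFreeRes k (Fin N) I (Paper.idealDeg k I))

/-- The generators of the `i`-th free module of a resolution. -/
abbrev Generators (i : ℕ) : Type :=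
  (j : ℤ) × Fin (res.β i j)

instance (i : ℕ) : Finite (Generators res i) :=
  finite_sigma_fin (res.rowFinite i)

/-- The total degree of a generator. -/
def generatorDegree (i : ℕ) (s : Generators res i) : ℤ :=
  i + s.1

/-- The differentials of a resolution, on free modules of functions instead of finitely supported
functions. -/
def differential (i : ℕ) :
    (Generators res (i + 1) → MvPolynomial (Fin N) k) →ₗ[MvPolynomial (Fin N) k]
      (Generators res i → MvPolynomial (Fin N) k) :=
  (Finsupp.linearEquivFunOnFinite _ _ _).toLinearMap ∘ₗ res.d i ∘ₗ
    (Finsupp.linearEquivFunOnFinite _ _ _).symm.toLinearMap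

/-- The augmentation of a resolution of `I`, with values in the free module containing
`ofIdeal I`. -/
def augmentation : (Generators res 0 → MvPolynomial (Fin N) k) →ₗ[MvPolynomial (Fin N) k]
    (Unit → MvPolynomial (Fin N) k) :=
  LinearMap.pi (fun _ => I.subtype) ∘ₗ res.ε ∘ₗ
    (Finsupp.linearEquivFunOnFinite _ _ _).symm.toLinearMap

theorem differential_single [DecidableEq (Generators res (i + 1))] (s : Generators res (i + 1))
    (s' : Generators res i) :
    differential res i (Pi.single s 1) s' = res.d i (Finsupp.single s 1) s' := by
  simp [differential, Finsupp.linearEquivFunOnFinite_symm_single]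

theorem isGradedMap_differential (i : ℕ) :
    IsGradedMap (generatorDegree res (i + 1)) (generatorDegree res i) (differential res i) := by
  classical
  refine isGradedMap_of_single fun ⟨j, s⟩ ⟨j', s'⟩ => ?_
  rw [differential_single]
  convert isHomog_of_homogOfDeg (res.graded i j j' s s') using 1
  simp only [generatorDegree]
  push_cast
  ring

theorem isGradedMap_augmentation :
    IsGradedMap (generatorDegree res 0) (fun _ => 0) (augmentation res) := by
  classical
  refine isGradedMap_of_single fun ⟨j, s⟩ _ => ?_
  convert isHomog_of_mem_idealDeg (res.eps_graded j s) using 1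
  · simp [augmentation, Finsupp.linearEquivFunOnFinite_symm_single]
  · simp [generatorDegree]

theorem constantCoeff_differential (i : ℕ) (f : Generators res (i + 1) → MvPolynomial (Fin N) k)
    (s : Generators res i) : constantCoeff (differential res i f s) = 0 := by
  classical
  refine constantCoeff_apply_eq_zero (fun s' => ?_) f
  rw [differential_single]
  by_cases h : s.1 = s'.1 + 1
  · rw [res.minimal i _ _ s'.2 s.2 h, map_zero]
  · exact constantCoeff_eq_zero (isHomog_of_homogOfDeg (res.graded i _ _ s'.2 s.2))
      (sub_ne_zero.mpr (Ne.symm h))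

theorem exact_differential (i : ℕ) :
    Function.Exact (differential res (i + 1)) (differential res i) :=
  (LinearEquiv.conj_exact_iff_exact _ _ (Finsupp.linearEquivFunOnFinite _ _ _)).mpr <|
    LinearEquiv.precomp_exact_iff_exact.mpr <|
      (LinearEquiv.postcomp_exact_iff_exact (e := Finsupp.linearEquivFunOnFinite _ _ _)).mpr <|
        res.exactSeq i

theorem exact_augmentation : Function.Exact (differential res 0) (augmentation res) := by
  have hinj : Function.Injective (LinearMap.pi fun _ : Unit => I.subtype) :=
    fun x y h => Subtype.ext (congrFun h ())
  exact (LinearEquiv.conj_exact_iff_exact _ _ (Finsupp.linearEquivFunOnFinite _ _ _)).mpr <|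
    LinearEquiv.precomp_exact_iff_exact.mpr <| hinj.comp_exact_iff_exact.mpr res.exact0

theorem range_augmentation : LinearMap.range (augmentation res) = ofIdeal I := by
  ext f
  rw [mem_ofIdeal]
  constructor
  · rintro ⟨g, rfl⟩
    exact Subtype.property _
  · intro hf
    obtain ⟨g, hg⟩ := res.eps_surj ⟨f (), hf⟩
    exact ⟨g, by simp [augmentation, hg, _root_.funext_iff]⟩

theorem hasBetti_ofIdeal (p : ℕ) :
    HasBetti p (fun _ => 0) ⊥ (ofIdeal I) fun i t => res.β i (t - i) := by
  have h := HasBetti.of_minimalResolution (isGradedMap_differential res) (exact_differential res)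
    (constantCoeff_differential res) (isGradedMap_augmentation res) (exact_augmentation res) p
  rw [range_augmentation] at h
  exact (funext₂ fun i => natCard_sigma_fin (res.β i) i) ▸ h

theorem betti_eq {A : Finset (Fin N)} {u v : Fin N →₀ ℕ} (hu : u.support ⊆ A)
    (hv : ∀ i ∈ A, v i = 0) (hv₀ : v ≠ 0)
    (hI : I = Ideal.span {monomial (u + v) 1} ⊔
      Ideal.span (X '' (A : Set (Fin N))) ^ (u.degree + 1)) (i : ℕ) (j : ℤ) :
    res.β i j =
      (if j = (u.degree : ℤ) + 1 then
        (A.card + u.degree).choose (i + u.degree + 1) * (u.degree + i).choose u.degree else 0) +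
        if j = ((u.degree + v.degree : ℕ) : ℤ) then A.card.choose i else 0 := by
  have hres := hasBetti_ofIdeal res (i + 1)
  have htable := hasBetti_span_monomial_sup_span_X_pow (R := k) hu hv hv₀ (i + 1)
  rw [← hI] at htable
  have h := congrFun (hres.unique (isGradedSubmodule_bot _) htable i i.lt_succ_self) (i + j)
  simpa [linearStrand, add_comm (i : ℤ)] using h

end BettiNumbers

end GradedBetti

end

/-- Lemma 5.3(b): for `I = (uv) + J^{r+1}` as in Lemma 5.3 with `deg(uv) > r + 1`:
`β_{i,r+1}(I) = C(e+r, i+r+1)·C(r+i, r)` for `0 ≤ i < e`,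
`β_{i,deg(uv)}(I) = C(e, i)` for `0 ≤ i ≤ e`, and all other graded Betti numbers of `I`
vanish. -/
theorem stmt16 (k : Type) [Field k] (n e r : ℕ) (he : 1 ≤ e) (hr : 1 ≤ r)
    (mu mv : Fin (n + e + 1) →₀ ℕ)
    (hmu : Paper.tdeg mu = r)
    (hmusupp : ∀ i : Fin (n + e + 1), e ≤ (i : ℕ) → mu i = 0)
    (hmvne : 1 ≤ Paper.tdeg mv)
    (hmvsupp : ∀ i : Fin (n + e + 1), (i : ℕ) < e → mv i = 0)
    (hdeg : r + 1 < Paper.tdeg mu + Paper.tdeg mv)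
    (J I : Ideal (MvPolynomial (Fin (n + e + 1)) k))
    (hJdef : J = Ideal.span {p | ∃ i : Fin (n + e + 1), (i : ℕ) < e ∧ p = MvPolynomial.X i})
    (hIdef : I = Ideal.span {MvPolynomial.monomial (mu + mv) (1 : k)} ⊔ J ^ (r + 1)) :
    ∀ res : Paper.MinGradedFreeRes k (Fin (n + e + 1)) ↥I (Paper.idealDeg k I),
      (∀ i : ℕ, i < e →
        res.β i ((r : ℤ) + 1) = (e + r).choose (i + r + 1) * (r + i).choose r) ∧
      (∀ i : ℕ, i ≤ e →
        res.β i ((Paper.tdeg mu + Paper.tdeg mv : ℕ) : ℤ) = e.choose i) ∧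
      (∀ (i : ℕ) (j : ℤ), ¬(i < e ∧ j = (r : ℤ) + 1) →
        ¬(i ≤ e ∧ j = ((Paper.tdeg mu + Paper.tdeg mv : ℕ) : ℤ)) → res.β i j = 0) := by
  intro res
  let A : Finset (Fin (n + e + 1)) := {i | (i : ℕ) < e}
  have hmem (i) : i ∈ A ↔ (i : ℕ) < e := Finset.mem_filter_univ i
  have hcard : A.card = e := by rw [Fin.card_filter_val_lt, min_eq_right (by omega)]
  have hJ : J = Ideal.span (MvPolynomial.X '' (A : Set (Fin (n + e + 1)))) := by
    rw [hJdef]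
    congr! 1
    ext p
    simp [hmem, eq_comm]
  have hβ := GradedBetti.betti_eq res (A := A) (u := mu) (v := mv)
    (fun i hi => (hmem i).mpr (not_le.mp (Finsupp.mem_support_iff.mp hi ∘ hmusupp i)))
    (fun i hi => hmvsupp i ((hmem i).mp hi)) (fun h => by simp [h, Paper.tdeg] at hmvne)
    (by rw [hIdef, hJ, ← hmu]; rfl)
  have htdeg : Paper.tdeg mv = mv.degree := rfl
  rw [show mu.degree = r from hmu, hcard] at hβ
  rw [hmu, htdeg] at hdeg ⊢
  refine ⟨fun i _ => ?_, fun i _ => ?_, fun i j hi hi' => ?_⟩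
  · rw [hβ, if_pos rfl, if_neg (by omega), add_zero]
  · rw [hβ, if_neg (by omega), if_pos rfl, zero_add]
  · rw [hβ, Nat.add_eq_zero_iff, ite_eq_right_iff, ite_eq_right_iff]
    refine ⟨fun hj => ?_, fun hj => Nat.choose_eq_zero_of_lt (by omega)⟩
    rw [Nat.choose_eq_zero_of_lt (by omega), zero_mul]
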